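/- Let (W, S) be a Coxeter system whose Coxeter graph is bipartite and which has Property F. Let w ∈ W_c be such that 𝓛(w) = 𝓡(w) and |𝓛(w)| = n(w). Then ℓ(w) ≡ n(w) (mod 2). -/

import Mathlib

open CoxeterSystem

variable {B W : Type*} [Group W] {M : CoxeterMatrix B} (cs : CoxeterSystem M W)

/-- `m(s,t) ≥ 3`: `s` and `t` are distinct noncommuting generators
(`M s t = 0` encodes `m(s,t) = ∞`). -/
def Noncomm (M : CoxeterMatrix B) (s t : B) : Prop := M s t = 0 ∨ 3 ≤ M s t

/-- The longest element `w_{st}` of the rank-2 parabolic subgroup `⟨s,t⟩`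
(meaningful when `3 ≤ M s t < ∞`). -/
def longest (s t : B) : W := cs.wordProd (alternatingWord s t (M s t))

/-- `w` is complex: it admits a reduced factorization `x₁ · w_{st} · x₂` where `w_{st}`
is the longest element of a rank-2 parabolic subgroup `⟨s,t⟩` with `3 ≤ m(s,t) < ∞`. -/
def IsComplex (w : W) : Prop :=
  ∃ s t : B, 3 ≤ M s t ∧ ∃ x₁ x₂ : W,
    w = x₁ * longest cs s t * x₂ ∧
    cs.length w = cs.length x₁ + cs.length (longest cs s t : W) + cs.length x₂

/-- `w` is fully commutative, i.e. `w ∈ W_c`. -/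
def FullyComm (w : W) : Prop := ¬ IsComplex cs w

/-- `x` is weakly complex: `x` is complex and `x = s·u` reduced with `u` fully commutative. -/
def IsWeaklyComplex (x : W) : Prop :=
  IsComplex cs x ∧ ∃ (s : B) (u : W), FullyComm cs u ∧ x = cs.simple s * u ∧
    cs.length x = 1 + cs.length u

/-- The alternating product `t s t s ⋯` with `k` factors, beginning with `t`. -/
def altProd (t s : B) (k : ℕ) : W :=
  cs.wordProd ((List.range k).map (fun i => if i % 2 = 0 then t else s))

/-- The left descent set `𝓛(w)`. -/
def leftDescents (w : W) : Set B := {i | cs.IsLeftDescent w i}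

/-- The right descent set `𝓡(w)`. -/
def rightDescents (w : W) : Set B := {i | cs.IsRightDescent w i}

/-- `w` is a reduced product of distinct pairwise commuting generators. -/
def IsCommProd (w : W) : Prop :=
  ∃ l : List B, l.Nodup ∧ (∀ u ∈ l, ∀ u' ∈ l, u ≠ u' → M u u' = 2) ∧
    cs.IsReduced l ∧ w = cs.wordProd l

/-- `y` is left star reducible to `x` with respect to the pair `{s,t}`:
`x` and `y` lie in the same left `{s,t}`-string and `ℓ(x) = ℓ(y) − 1`. -/
def LeftStarReducible (s t : B) (y x : W) : Prop :=
  Noncomm M s t ∧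
  ((cs.IsLeftDescent y s ∧ ¬ cs.IsLeftDescent y t ∧ x = cs.simple s * y ∧
      cs.IsLeftDescent x t) ∨
   (cs.IsLeftDescent y t ∧ ¬ cs.IsLeftDescent y s ∧ x = cs.simple t * y ∧
      cs.IsLeftDescent x s))

/-- `y` is right star reducible to `x` with respect to the pair `{s,t}`. -/
def RightStarReducible (s t : B) (y x : W) : Prop :=
  Noncomm M s t ∧
  ((cs.IsRightDescent y s ∧ ¬ cs.IsRightDescent y t ∧ x = y * cs.simple s ∧
      cs.IsRightDescent x t) ∨
   (cs.IsRightDescent y t ∧ ¬ cs.IsRightDescent y s ∧ x = y * cs.simple t ∧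
      cs.IsRightDescent x s))

/-- `y` is star reducible to `x`: there is a (possibly empty) chain of left and right
star reductions from `y` to `x`. -/
def StarReducible (y x : W) : Prop :=
  Relation.ReflTransGen
    (fun a b => ∃ s t : B, LeftStarReducible cs s t a b ∨ RightStarReducible cs s t a b) y x

/-- Property F: every fully commutative element is star reducible to a reduced product of
distinct pairwise commuting generators. -/
def PropertyF : Prop := ∀ w : W, FullyComm cs w → ∃ x : W, StarReducible cs w x ∧ IsCommProd cs x

/-- `n(w)`: the maximum `k` such that `w` admits a reduced factorization `w = w₁·w₂·w₃`
with `w₂` a reduced product of `k` distinct pairwise commuting generators. -/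
noncomputable def nval (w : W) : ℕ :=
  sSup {k | ∃ w₁ w₂ w₃ : W, w = w₁ * w₂ * w₃ ∧
    cs.length w = cs.length w₁ + cs.length w₂ + cs.length w₃ ∧
    IsCommProd cs w₂ ∧ cs.length w₂ = k}

/-- The Bruhat order: `x ≤ w` iff some reduced word for `w` has a subword that is a
reduced word for `x`. -/
def BruhatLE (x w : W) : Prop :=
  ∃ l l' : List B, cs.IsReduced l ∧ cs.wordProd l = w ∧
    l'.Sublist l ∧ cs.IsReduced l' ∧ cs.wordProd l' = x

/-- `w = wI · wII` is the coset decomposition of `w` with respect to `I = {s,t}`: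
`wI ∈ W_I`, `𝓛(wII) ∩ I = ∅` and `ℓ(w) = ℓ(wI) + ℓ(wII)`. -/
def CosetDecompL (s t : B) (w wI wII : W) : Prop :=
  w = wI * wII ∧ wI ∈ Subgroup.closure {cs.simple s, cs.simple t} ∧
  ¬ cs.IsLeftDescent wII s ∧ ¬ cs.IsLeftDescent wII t ∧
  cs.length w = cs.length wI + cs.length wII

/-- `w = wII · wI` is the right coset decomposition of `w` with respect to `I = {s,t}`:
`wI ∈ W_I`, `𝓡(wII) ∩ I = ∅` and `ℓ(w) = ℓ(wII) + ℓ(wI)`. -/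
def CosetDecompR (s t : B) (w wII wI : W) : Prop :=
  w = wII * wI ∧ wI ∈ Subgroup.closure {cs.simple s, cs.simple t} ∧
  ¬ cs.IsRightDescent wII s ∧ ¬ cs.IsRightDescent wII t ∧
  cs.length w = cs.length wII + cs.length wI

/-- `k_ε(J) = (−1)^{|J ∩ ε⁻¹(0)|}` for a set `J` of generators. -/
noncomputable def kSet (ε : B → Bool) (J : Set B) : ℤ :=
  (-1) ^ (J ∩ {i | ε i = false}).ncard

/-- `k_ε(w) = k_ε(𝓛(w)) · k_ε(𝓡(w))`. -/
noncomputable def kElt (ε : B → Bool) (w : W) : ℤ :=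
  kSet ε (leftDescents cs w) * kSet ε (rightDescents cs w)

namespace CoxeterMatrix

open Module Polynomial.Chebyshev

/-- The coefficient `-2 cos (π / m)` of the geometric representation, read as `-2` for `m = ∞`. -/
noncomputable def geomCoeff (M : CoxeterMatrix B) (i j : B) : ℝ :=
  if M i j = 0 then -2 else -2 * Real.cos (Real.pi / M i j)

theorem geomCoeff_self (M : CoxeterMatrix B) (i : B) : M.geomCoeff i i = 2 := by
  simp [geomCoeff]

theorem geomCoeff_comm (M : CoxeterMatrix B) (i j : B) : M.geomCoeff i j = M.geomCoeff j i := by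
  simp [geomCoeff, M.symmetric i j]

/-- The simple coroot `α_j ↦ geomCoeff i j` on the space with basis the simple roots. -/
noncomputable def coroot (M : CoxeterMatrix B) (i : B) : Dual ℝ (B →₀ ℝ) :=
  Finsupp.linearCombination ℝ (M.geomCoeff i)

@[simp] theorem coroot_single (M : CoxeterMatrix B) (i j : B) :
    M.coroot i (Finsupp.single j 1) = M.geomCoeff i j := by
  simp [coroot]

theorem coroot_self (M : CoxeterMatrix B) (i : B) :
    M.coroot i (Finsupp.single i 1) = 2 := by
  simp [geomCoeff_self]

/-- The reflection by which the generator `i` acts in the geometric representation. -/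
noncomputable def geomReflection (M : CoxeterMatrix B) (i : B) : (B →₀ ℝ) ≃ₗ[ℝ] (B →₀ ℝ) :=
  reflection (M.coroot_self i)

theorem geomReflection_apply (M : CoxeterMatrix B) (i : B) (v : B →₀ ℝ) :
    M.geomReflection i v = v - M.coroot i v • Finsupp.single i 1 := by
  simp [geomReflection, reflection_apply]

theorem geomCoeff_mul_geomCoeff_sub_two (M : CoxeterMatrix B) {i j : B} (h : M i j ≠ 0) :
    M.geomCoeff i j * M.geomCoeff j i - 2 = 2 * Real.cos (2 * Real.pi / M i j) := by
  rw [M.geomCoeff_comm j i, geomCoeff, if_neg h,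
    show 2 * Real.pi / (M i j : ℝ) = 2 * (Real.pi / M i j) by ring, Real.cos_two_mul]
  ring

theorem sin_two_pi_div_pos {m : ℕ} (hm : 3 ≤ m) : 0 < Real.sin (2 * Real.pi / m) := by
  have hm' : (3 : ℝ) ≤ m := by exact_mod_cast hm
  apply Real.sin_pos_of_pos_of_lt_pi
  · have := Real.pi_pos
    positivity
  · rw [div_lt_iff₀ (by linarith)]
    nlinarith [Real.pi_pos]

theorem geomReflection_mul_pow (M : CoxeterMatrix B) (i j : B) :
    (M.geomReflection i * M.geomReflection j) ^ M i j = 1 := by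
  obtain h0 | h1 | h2 | h3 : M i j = 0 ∨ M i j = 1 ∨ M i j = 2 ∨ 3 ≤ M i j := by omega
  · simp [h0]
  · have hij : i = j := by
      by_contra hne
      exact M.off_diagonal i j hne h1
    subst hij
    rw [h1, pow_one]
    ext1 v
    exact involutive_reflection (M.coroot_self i) v
  · have hc : M.geomCoeff i j = 0 := by simp [geomCoeff, h2]
    have hc' : M.geomCoeff j i = 0 := by rw [M.geomCoeff_comm, hc]
    rw [h2]
    ext1 v
    simp only [pow_two, LinearEquiv.mul_apply, geomReflection_apply, map_sub, map_smul,
      coroot_single, geomCoeff_self, hc, hc', LinearEquiv.coe_one, id]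
    module
  · have hsin := sin_two_pi_div_pos h3
    have hS (n : ℤ) := S_two_mul_real_cos (2 * Real.pi / (M i j : ℝ)) n
    set θ := 2 * Real.pi / (M i j : ℝ) with hθ
    have hmθ : (M i j : ℝ) * θ = 2 * Real.pi := by
      rw [hθ]
      field_simp
    have ht : 2 * Real.cos θ = M.coroot i (Finsupp.single j 1) *
        M.coroot j (Finsupp.single i 1) - 2 := by
      rw [coroot_single, coroot_single, geomCoeff_mul_geomCoeff_sub_two M (by omega)]
    ext1 v
    rw [geomReflection, geomReflection,
      reflection_mul_reflection_pow_apply _ _ (M i j) v (2 * Real.cos θ) ht]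
    obtain ⟨k, hk | hk⟩ : ∃ k : ℕ, M i j = 2 * k ∨ M i j = 2 * k + 1 := ⟨M i j / 2, by omega⟩
    · have hzero : (S ℝ ((k : ℤ) - 1)).eval (2 * Real.cos θ) = 0 := by
        have := hS (k - 1)
        rw [show (((k : ℤ) - 1 : ℤ) + 1 : ℝ) * θ = Real.pi by
          rw [hk] at hmθ; push_cast at hmθ ⊢; linarith, Real.sin_pi] at this
        exact (mul_eq_zero.mp this).resolve_right hsin.ne'
      rw [hk, show (((2 * k : ℕ) : ℤ) - 2) / 2 = (k : ℤ) - 1 by omega,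
        show (((2 * k : ℕ) : ℤ) - 1) / 2 = (k : ℤ) - 1 by omega, hzero]
      simp
    · have hzero : (S ℝ (k : ℤ)).eval (2 * Real.cos θ) +
          (S ℝ ((k : ℤ) - 1)).eval (2 * Real.cos θ) = 0 := by
        have h₁ := hS (k - 1)
        have h₂ := hS k
        push_cast at h₁ h₂
        rw [sub_add_cancel] at h₁
        rw [show ((k : ℝ) + 1) * θ = 2 * Real.pi - k * θ by
          rw [hk] at hmθ; push_cast at hmθ; linarith, Real.sin_two_pi_sub] at h₂
        refine (mul_eq_zero.mp ?_).resolve_right hsin.ne'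
        rw [add_mul, h₁, h₂]
        ring
      rw [hk, show (((2 * k + 1 : ℕ) : ℤ) - 2) / 2 = (k : ℤ) - 1 by omega,
        show (((2 * k + 1 : ℕ) : ℤ) - 1) / 2 = (k : ℤ) by omega,
        show (((2 * k + 1 : ℕ) : ℤ) - 3) / 2 = (k : ℤ) - 1 by omega,
        show ((2 * k + 1 : ℕ) : ℤ) / 2 = (k : ℤ) by omega, hzero]
      simp

theorem dvd_of_geomReflection_mul_pow_eq_one (M : CoxeterMatrix B) {i j : B}
    (h : M i j = 0 ∨ 3 ≤ M i j) {k : ℕ}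
    (hk : (M.geomReflection i * M.geomReflection j) ^ k = 1) : M i j ∣ k := by
  have hij : i ≠ j := by
    rintro rfl
    simp at h
  have key := reflection_mul_reflection_pow_apply_self (M.coroot_self i) (M.coroot_self j) k
  change ((M.geomReflection i * M.geomReflection j) ^ k) _ = _ at key
  rw [hk] at key
  simp only [coroot_single, LinearEquiv.coe_one, id] at key
  set t := M.geomCoeff i j * M.geomCoeff j i - 2 with ht
  have hi := DFunLike.congr_fun key i
  have hj := DFunLike.congr_fun key j
  simp [hij, hij.symm] at hi hj
  have hc : M.geomCoeff j i ≠ 0 := by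
    rw [M.geomCoeff_comm, geomCoeff]
    obtain h0 | h3 := h
    · simp [h0]
    · rw [if_neg (by omega)]
      have hm' : (3 : ℝ) ≤ M i j := by exact_mod_cast h3
      have : 0 < Real.cos (Real.pi / M i j) := by
        apply Real.cos_pos_of_mem_Ioo
        constructor
        · have := Real.pi_pos
          have : 0 < Real.pi / M i j := by positivity
          linarith
        · rw [div_lt_iff₀ (by linarith)]
          nlinarith [Real.pi_pos]
      simpa using this.ne'
  have hS₁ : (S ℝ ((k : ℤ) - 1)).eval t = 0 := hj.resolve_right hc
  have hS₂ : (S ℝ (k : ℤ)).eval t = 1 := by rw [hS₁] at hi; linarith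
  obtain h0 | h3 := h
  · have : t = 2 := by
      rw [ht, M.geomCoeff_comm j i, geomCoeff, if_pos h0]
      norm_num
    rw [this, S_eval_two] at hS₁
    have hk0 : k = 0 := by
      push_cast at hS₁
      rw [sub_add_cancel] at hS₁
      exact_mod_cast hS₁
    simp [hk0]
  · rw [geomCoeff_mul_geomCoeff_sub_two M (by omega)] at ht
    have hsin := sin_two_pi_div_pos h3
    have h₁ := S_two_mul_real_cos (2 * Real.pi / (M i j : ℝ)) (k - 1)
    have h₂ := S_two_mul_real_cos (2 * Real.pi / (M i j : ℝ)) k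
    rw [← ht, hS₁] at h₁
    rw [← ht, hS₂] at h₂
    push_cast at h₁ h₂
    rw [sub_add_cancel, zero_mul] at h₁
    rw [add_mul, one_mul, one_mul, Real.sin_add, ← h₁, zero_mul, zero_add] at h₂
    have hcos : Real.cos ((k : ℝ) * (2 * Real.pi / M i j)) = 1 :=
      mul_right_cancel₀ hsin.ne' (by rw [← h₂, one_mul])
    obtain ⟨n, hn⟩ := (Real.cos_eq_one_iff _).mp hcos
    have hm' : (M i j : ℝ) ≠ 0 := by
      have : M i j ≠ 0 := by omega
      exact_mod_cast this
    have hkn : (k : ℝ) = n * M i j := by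
      field_simp at hn
      linarith
    have : (k : ℤ) = n * M i j := by exact_mod_cast hkn
    exact Int.natCast_dvd_natCast.mp ⟨n, by rw [this, mul_comm]⟩

end CoxeterMatrix

namespace CoxeterSystem

/-- The geometric representation of a Coxeter group. -/
noncomputable def geomRep : W →* ((B →₀ ℝ) ≃ₗ[ℝ] (B →₀ ℝ)) :=
  cs.lift ⟨M.geomReflection, M.geomReflection_mul_pow⟩

@[simp] theorem geomRep_simple (i : B) : cs.geomRep (cs.simple i) = M.geomReflection i :=
  cs.lift_apply_simple _ i

theorem simple_injective : Function.Injective cs.simple := by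
  intro i j hs
  by_contra hij
  have h := congrArg cs.geomRep hs
  rw [geomRep_simple, geomRep_simple] at h
  have h' := DFunLike.congr_fun (LinearEquiv.congr_fun h (Finsupp.single i 1)) i
  rw [M.geomReflection_apply, M.geomReflection_apply] at h'
  simp [M.geomCoeff_self, hij] at h'

theorem dvd_of_simple_mul_simple_pow_eq_one {i j : B} (h : Noncomm M i j) {k : ℕ}
    (hk : (cs.simple i * cs.simple j) ^ k = 1) : M i j ∣ k := by
  apply M.dvd_of_geomReflection_mul_pow_eq_one h
  have := congrArg cs.geomRep hk
  simpa using this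

end CoxeterSystem

namespace CoxeterSystem

open Classical in
/-- The involution `(x, e) ↦ (s x s, e + [x = s])` of `W × ZMod 2`. -/
noncomputable def signedConj (i : B) : Function.End (W × ZMod 2) := fun p =>
  (cs.simple i * p.1 * cs.simple i, p.2 + if p.1 = cs.simple i then 1 else 0)

open Classical in
theorem signedConj_mul_pow_apply (i j : B) (m : ℕ) (x : W) (e : ZMod 2) :
    ((cs.signedConj i * cs.signedConj j) ^ m) (x, e) =
      ((cs.simple i * cs.simple j) ^ m * x * (cs.simple j * cs.simple i) ^ m,
        e + ∑ k ∈ Finset.range (2 * m),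
          if x = (cs.simple j * cs.simple i) ^ k * cs.simple j then 1 else 0) := by
  induction m with
  | zero =>
    simp
    rfl
  | succ m ih =>
    have hinv : ((cs.simple i * cs.simple j) ^ m)⁻¹ = (cs.simple j * cs.simple i) ^ m := by
      rw [← inv_pow, mul_inv_rev, inv_simple, inv_simple]
    have hconj (a b : W) : (cs.simple i * cs.simple j) ^ m * a *
        (cs.simple j * cs.simple i) ^ m = b ↔
        a = (cs.simple j * cs.simple i) ^ m * b * (cs.simple i * cs.simple j) ^ m := by
      rw [← hinv]
      constructor
      · rintro rfl
        group
      · rintro rfl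
        group
    have hswap (n : ℕ) : cs.simple j * (cs.simple i * cs.simple j) ^ n =
        (cs.simple j * cs.simple i) ^ n * cs.simple j := by
      induction n with
      | zero => simp
      | succ n ihn => rw [pow_succ, ← mul_assoc, ihn, pow_succ]; simp only [mul_assoc]
    rw [pow_succ']
    change cs.signedConj i (cs.signedConj j (((cs.signedConj i * cs.signedConj j) ^ m) (x, e))) = _
    rw [ih]
    simp only [signedConj]
    refine Prod.ext ?_ ?_
    · simp only [pow_succ' (cs.simple i * cs.simple j), pow_succ (cs.simple j * cs.simple i),
        mul_assoc]
    · simp only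
      rw [show 2 * (m + 1) = 2 * m + 1 + 1 by ring, Finset.sum_range_succ, Finset.sum_range_succ]
      have h₁ : ((cs.simple i * cs.simple j) ^ m * x * (cs.simple j * cs.simple i) ^ m =
          cs.simple j) ↔ x = (cs.simple j * cs.simple i) ^ (2 * m) * cs.simple j := by
        rw [hconj, mul_assoc, hswap, ← mul_assoc, ← pow_add, two_mul]
      have h₂ : (cs.simple j * ((cs.simple i * cs.simple j) ^ m * x *
          (cs.simple j * cs.simple i) ^ m) * cs.simple j = cs.simple i) ↔
          x = (cs.simple j * cs.simple i) ^ (2 * m + 1) * cs.simple j := by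
        have : (cs.simple j * ((cs.simple i * cs.simple j) ^ m * x *
          (cs.simple j * cs.simple i) ^ m) * cs.simple j = cs.simple i) ↔
          ((cs.simple i * cs.simple j) ^ m * x *
            (cs.simple j * cs.simple i) ^ m = cs.simple j * cs.simple i * cs.simple j) := by
          rw [← mul_left_inj (cs.simple j), ← mul_right_inj (cs.simple j)]
          simp [mul_assoc]
        rw [this, hconj]
        rw [mul_assoc, mul_assoc, hswap, ← mul_assoc, ← mul_assoc, ← mul_assoc,
          show 2 * m + 1 = m + 1 + m by ring, pow_add, pow_succ]
        simp only [mul_assoc]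
      simp only [h₁, h₂, add_assoc]

theorem isLiftable_signedConj : M.IsLiftable cs.signedConj := by
  classical
  intro i j
  funext p
  obtain ⟨x, e⟩ := p
  have hji : (cs.simple j * cs.simple i) ^ M i j = 1 := cs.simple_mul_simple_pow' i j
  rw [signedConj_mul_pow_apply, hji, cs.simple_mul_simple_pow, two_mul, Finset.sum_range_add]
  simp only [pow_add, hji, one_mul, mul_one]
  rw [CharTwo.add_self_eq_zero, add_zero]
  rfl

/-- The action of `W` on `W × ZMod 2` through `signedConj`. -/
noncomputable def signedConjHom : W →* Function.End (W × ZMod 2) :=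
  cs.lift ⟨cs.signedConj, cs.isLiftable_signedConj⟩

@[simp] theorem signedConjHom_simple (i : B) :
    cs.signedConjHom (cs.simple i) = cs.signedConj i :=
  cs.lift_apply_simple _ i

open Classical in
theorem signedConjHom_wordProd_apply (ω : List B) (x : W) (e : ZMod 2) :
    cs.signedConjHom (cs.wordProd ω) (x, e) =
      (cs.wordProd ω * x * (cs.wordProd ω)⁻¹, e + (cs.rightInvSeq ω).count x) := by
  induction ω with
  | nil =>
    simp
    rfl
  | cons i ω ih =>
    rw [wordProd_cons, map_mul]
    change cs.signedConjHom (cs.simple i) (cs.signedConjHom (cs.wordProd ω) (x, e)) = _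
    rw [ih, signedConjHom_simple, signedConj, rightInvSeq, List.count_cons]
    refine Prod.ext ?_ ?_
    · simp [mul_assoc]
    · have : (cs.wordProd ω * x * (cs.wordProd ω)⁻¹ = cs.simple i) ↔
          ((cs.wordProd ω)⁻¹ * cs.simple i * cs.wordProd ω = x) := by
        constructor
        · intro h
          rw [← h]
          group
        · rintro rfl
          group
      simp only [this, beq_iff_eq]
      push_cast
      ring

theorem IsRightDescent.mem_rightInvSeq {ω : List B} {i : B}
    (h : cs.IsRightDescent (cs.wordProd ω) i) : cs.simple i ∈ cs.rightInvSeq ω := by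
  classical
  by_contra hmem
  obtain ⟨ω', hω', hprod⟩ := cs.exists_isReduced (cs.wordProd ω * cs.simple i)
  have h₁ : cs.signedConjHom (cs.wordProd ω * cs.simple i) (cs.simple i, 0) =
      cs.signedConjHom (cs.wordProd ω) (cs.simple i, 1) := by
    rw [map_mul]
    change cs.signedConjHom (cs.wordProd ω)
      (cs.signedConjHom (cs.simple i) (cs.simple i, 0)) = _
    rw [signedConjHom_simple]
    simp [signedConj]
  rw [hprod, signedConjHom_wordProd_apply, signedConjHom_wordProd_apply,
    List.count_eq_zero_of_not_mem hmem] at h₁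
  have h₂ := congrArg Prod.snd h₁
  have hmem' : cs.simple i ∈ cs.rightInvSeq ω' := by
    by_contra hn
    rw [List.count_eq_zero_of_not_mem hn] at h₂
    simp at h₂
  have h₃ := (cs.isRightInversion_of_mem_rightInvSeq hω' hmem').2
  rw [← hprod, simple_mul_simple_cancel_right] at h₃
  exact lt_asymm h h₃

theorem IsLeftDescent.mem_leftInvSeq {ω : List B} {i : B}
    (h : cs.IsLeftDescent (cs.wordProd ω) i) : cs.simple i ∈ cs.leftInvSeq ω := by
  rw [← cs.isRightDescent_inv_iff, ← cs.wordProd_reverse] at h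
  have := IsRightDescent.mem_rightInvSeq cs h
  rwa [cs.rightInvSeq_reverse, List.mem_reverse] at this

/-- The exchange condition on the left. -/
theorem IsLeftDescent.exists_eraseIdx {ω : List B} {i : B}
    (h : cs.IsLeftDescent (cs.wordProd ω) i) :
    ∃ (j : ℕ) (hj : j < ω.length),
      cs.simple i = (cs.leftInvSeq ω)[j]'(by simpa using hj) ∧
      cs.simple i * cs.wordProd ω = cs.wordProd (ω.eraseIdx j) := by
  obtain ⟨j, hj, hs⟩ := List.mem_iff_getElem.mp (IsLeftDescent.mem_leftInvSeq cs h)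
  refine ⟨j, by simpa using hj, hs.symm, ?_⟩
  rw [← cs.getD_leftInvSeq_mul_wordProd, List.getD_eq_getElem _ _ hj, hs]

/-- The exchange condition on the right. -/
theorem IsRightDescent.exists_eraseIdx {ω : List B} {i : B}
    (h : cs.IsRightDescent (cs.wordProd ω) i) :
    ∃ j < ω.length, cs.wordProd ω * cs.simple i = cs.wordProd (ω.eraseIdx j) := by
  obtain ⟨j, hj, hs⟩ := List.mem_iff_getElem.mp (IsRightDescent.mem_rightInvSeq cs h)
  refine ⟨j, by simpa using hj, ?_⟩
  rw [← cs.wordProd_mul_getD_rightInvSeq, List.getD_eq_getElem _ _ hj, hs]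

/-- If `s_j` does not shorten `w` on the right, but shortens `s_i w`, then `s_i w = w s_j`. -/
theorem simple_mul_eq_mul_simple {w : W} {i j : B}
    (hj : ¬ cs.IsRightDescent w j) (h : cs.IsRightDescent (cs.simple i * w) j) :
    cs.simple i * w = w * cs.simple j := by
  obtain ⟨ω, hω, rfl⟩ := cs.exists_isReduced w
  rw [← wordProd_cons] at h
  obtain ⟨k, hk, hprod⟩ := IsRightDescent.exists_eraseIdx cs h
  rw [wordProd_cons] at hprod
  cases k with
  | zero =>
    rw [List.eraseIdx_cons_zero] at hprod
    simpa using congrArg (· * cs.simple j) hprod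
  | succ k =>
    rw [List.eraseIdx_cons_succ, wordProd_cons, mul_assoc, mul_right_inj] at hprod
    refine absurd ?_ hj
    rw [IsRightDescent, hprod, hω.eq]
    have hk' : k < ω.length := by simpa using hk
    have := cs.length_wordProd_le (ω.eraseIdx k)
    rw [List.length_eraseIdx_of_lt hk'] at this
    omega

theorem isLeftDescent_simple_mul {w : W} {i j : B} (hij : i ≠ j) (hM : M i j = 2)
    (hj : cs.IsLeftDescent w j) : cs.IsLeftDescent (cs.simple i * w) j := by
  obtain ⟨ω, hω, hprod⟩ := cs.exists_isReduced (cs.simple i * w)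
  have hw : w = cs.wordProd (i :: ω) := by rw [wordProd_cons, ← hprod]; simp
  rw [hw] at hj
  obtain ⟨k, hk, -, hk'⟩ := IsLeftDescent.exists_eraseIdx cs hj
  rw [wordProd_cons] at hk'
  have hcomm : cs.simple j * cs.simple i = cs.simple i * cs.simple j := by
    have := cs.simple_mul_simple_pow' i j
    rw [hM, pow_two, mul_eq_one_iff_eq_inv, mul_inv_rev, inv_simple, inv_simple] at this
    exact this
  cases k with
  | zero =>
    rw [List.eraseIdx_cons_zero, ← mul_assoc, mul_eq_right, mul_eq_one_iff_eq_inv,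
      inv_simple] at hk'
    exact absurd (cs.simple_injective hk').symm hij
  | succ k =>
    rw [List.eraseIdx_cons_succ, wordProd_cons, ← mul_assoc, hcomm, mul_assoc,
      mul_right_inj] at hk'
    rw [hprod, IsLeftDescent, hk', hω.eq]
    have hk' : k < ω.length := by simpa using hk
    have := cs.length_wordProd_le (ω.eraseIdx k)
    rw [List.length_eraseIdx_of_lt hk'] at this
    omega

end CoxeterSystem

namespace CoxeterSystem

theorem reverse_alternatingWord (i j : B) (m : ℕ) :
    (alternatingWord i j m).reverse =
      if Even m then alternatingWord j i m else alternatingWord i j m := by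
  induction m generalizing i j with
  | zero => simp [alternatingWord]
  | succ m ih =>
    rw [alternatingWord_succ, List.concat_eq_append, List.reverse_append, ih,
      List.reverse_singleton, alternatingWord_succ', ← List.concat_eq_append,
      ← alternatingWord_succ, alternatingWord_succ']
    by_cases hm : Even m <;> simp [hm, Nat.even_add_one, ← Nat.not_even_iff_odd]

/-- The left inversions of an alternating word, with `u` the letter that extends it on the left
and `v` its first letter. -/
theorem getElem_leftInvSeq_alternatingWord_eq (i j u v : B) (k p : ℕ) (hp : p < k)
    (hu : u = if Even k then j else i) (hv : v = if Even k then i else j) :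
    (cs.leftInvSeq (alternatingWord i j k))[p]'(by simpa using hp) =
      cs.simple v * (cs.simple u * cs.simple v) ^ p := by
  have htake : alternatingWord i j k = (alternatingWord v u (2 * k)).take k := by
    rw [listTake_alternatingWord v u k k (by omega), hu, hv]
    split_ifs <;> rfl
  simp only [htake, leftInvSeq_take, List.getElem_take]
  rw [getElem_leftInvSeq_alternatingWord cs v u k p (by omega), prod_alternatingWord_eq_mul_pow,
    if_neg (by simp), show (2 * p + 1) / 2 = p by omega]

theorem simple_ne_simple_mul_pow {u v : B} (huv : Noncomm M u v) {p : ℕ}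
    (hp : M u v = 0 ∨ p + 1 < M u v) :
    cs.simple u ≠ cs.simple v * (cs.simple u * cs.simple v) ^ p := by
  intro h
  have hpow : (cs.simple u * cs.simple v) ^ (p + 1) = 1 := by
    rw [pow_succ', mul_assoc, ← h, simple_mul_simple_self]
  have hdvd := cs.dvd_of_simple_mul_simple_pow_eq_one huv hpow
  obtain h0 | hlt := hp
  · rw [h0] at hdvd
    simp at hdvd
  · exact absurd (Nat.le_of_dvd (by omega) hdvd) (by omega)

theorem exists_alternatingWord_append {w : W} {i j : B} (hij : Noncomm M i j)
    (hi : cs.IsLeftDescent w i) (hj : cs.IsLeftDescent w j) (k : ℕ)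
    (hk : M i j = 0 ∨ k ≤ M i j) :
    ∃ ω : List B, w = cs.wordProd (alternatingWord i j k ++ ω) ∧
      cs.length w = k + ω.length := by
  induction k with
  | zero =>
    obtain ⟨ω, hω, hw⟩ := cs.exists_isReduced w
    exact ⟨ω, by simpa [alternatingWord] using hw, by rw [hw, hω.eq]; simp⟩
  | succ k ih =>
    obtain ⟨ω, hw, hlen⟩ := ih (by omega)
    obtain ⟨u, hu⟩ : ∃ u, u = if Even k then j else i := ⟨_, rfl⟩
    obtain ⟨v, hv⟩ : ∃ v, v = if Even k then i else j := ⟨_, rfl⟩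
    have hdesc : cs.IsLeftDescent w u := by
      rw [hu]
      split_ifs <;> assumption
    have hMuv : M u v = M i j := by
      rw [hu, hv]
      split_ifs
      · exact M.symmetric j i
      · rfl
    have huv : Noncomm M u v := by rwa [Noncomm, hMuv]
    have hdesc' := hdesc
    rw [hw] at hdesc'
    obtain ⟨p, hp, hpinv, hperase⟩ := IsLeftDescent.exists_eraseIdx cs hdesc'
    have hpk : k ≤ p := by
      by_contra! hlt
      refine cs.simple_ne_simple_mul_pow (p := p) huv (by rw [hMuv]; omega) ?_
      have hpl : p < (alternatingWord i j k).length := by simpa using hlt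
      refine hpinv.trans ?_
      rw [← cs.getElem_leftInvSeq_alternatingWord_eq i j u v k p hlt hu hv,
        cs.getElem_leftInvSeq _ _ hp, cs.getElem_leftInvSeq _ _ hpl,
        List.take_append_of_le_length hpl.le, List.getElem_append_left hpl]
    rw [List.length_append, length_alternatingWord] at hp
    refine ⟨ω.eraseIdx (p - k), ?_, ?_⟩
    · rw [alternatingWord_succ', ← hu, List.cons_append, wordProd_cons]
      rw [List.eraseIdx_append_of_length_le (by simpa using hpk), length_alternatingWord] at hperase
      rw [← hperase, ← hw]
      simp
    · rw [List.length_eraseIdx_of_lt (by omega)]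
      omega

end CoxeterSystem

theorem isComplex_of_isLeftDescent {w : W} {i j : B} (hij : Noncomm M i j)
    (hi : cs.IsLeftDescent w i) (hj : cs.IsLeftDescent w j) : IsComplex cs w := by
  rcases hij with h0 | h3
  · obtain ⟨ω, -, hlen⟩ :=
      cs.exists_alternatingWord_append (Or.inl h0) hi hj (cs.length w + 1) (Or.inl h0)
    omega
  · obtain ⟨ω, hw, hlen⟩ :=
      cs.exists_alternatingWord_append (Or.inr h3) hi hj (M i j) (Or.inr le_rfl)
    rw [wordProd_append] at hw
    refine ⟨i, j, h3, 1, cs.wordProd ω, by rw [one_mul]; exact hw, ?_⟩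
    have h₁ : cs.length (longest cs i j) ≤ M i j := by
      simpa [longest] using cs.length_wordProd_le (alternatingWord i j (M i j))
    have h₂ := cs.length_wordProd_le ω
    have h₃ : cs.length w ≤ cs.length (longest cs i j) + cs.length (cs.wordProd ω) := by
      rw [hw]
      exact cs.length_mul_le _ _
    rw [length_one]
    omega

theorem FullyComm.coxeter_eq_two {w : W} (hw : FullyComm cs w) {i j : B} (hij : i ≠ j)
    (hi : cs.IsLeftDescent w i) (hj : cs.IsLeftDescent w j) : M i j = 2 := by
  by_contra hne
  refine hw (isComplex_of_isLeftDescent cs (?_ : Noncomm M i j) hi hj)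
  have := M.off_diagonal i j hij
  rw [Noncomm]
  omega

theorem longest_inv (i j : B) : (longest cs i j)⁻¹ = longest cs i j := by
  rw [longest, ← wordProd_reverse, reverse_alternatingWord]
  split_ifs
  · have := cs.wordProd_braidWord_eq i j
    rw [braidWord, braidWord, M.symmetric j i] at this
    exact this.symm
  · rfl

theorem FullyComm.inv {w : W} (hw : FullyComm cs w) : FullyComm cs w⁻¹ := by
  rintro ⟨i, j, h3, x₁, x₂, hprod, hlen⟩
  refine hw ⟨i, j, h3, x₂⁻¹, x₁⁻¹, ?_, ?_⟩
  · rw [← inv_inj, hprod]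
    simp [longest_inv, mul_assoc]
  · rw [← cs.length_inv w, hlen]
    simp only [length_inv]
    omega

/-- `x` is a factor of a reduced factorization of `y`. -/
def IsReducedFactor (x y : W) : Prop :=
  ∃ a b : W, y = a * x * b ∧ cs.length y = cs.length a + cs.length x + cs.length b

theorem IsReducedFactor.refl (x : W) : IsReducedFactor cs x x :=
  ⟨1, 1, by simp, by simp⟩

theorem IsReducedFactor.trans {x y z : W} (hxy : IsReducedFactor cs x y)
    (hyz : IsReducedFactor cs y z) : IsReducedFactor cs x z := by
  obtain ⟨a, b, rfl, hy⟩ := hxy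
  obtain ⟨c, d, rfl, hz⟩ := hyz
  refine ⟨c * a, b * d, by simp only [mul_assoc], ?_⟩
  have h₁ := cs.length_mul_le c a
  have h₂ := cs.length_mul_le b d
  have h₃ := cs.length_mul_le (c * a * x) (b * d)
  have h₄ := cs.length_mul_le (c * a) x
  rw [show c * a * x * (b * d) = c * (a * x * b) * d by simp only [mul_assoc]] at h₃
  omega

theorem FullyComm.of_isReducedFactor {x y : W} (hy : FullyComm cs y)
    (h : IsReducedFactor cs x y) : FullyComm cs x := by
  rintro ⟨i, j, h3, hx⟩
  have hx : IsReducedFactor cs (longest cs i j) x := hx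
  obtain ⟨a, b, hab⟩ := hx.trans cs h
  exact hy ⟨i, j, h3, a, b, hab⟩

theorem LeftStarReducible.symm {s t : B} {y x : W} (h : LeftStarReducible cs s t y x) :
    LeftStarReducible cs t s y x := by
  refine ⟨?_, h.2.symm⟩
  have := h.1
  rwa [Noncomm, M.symmetric s t] at this

theorem LeftStarReducible.isReducedFactor {s t : B} {y x : W}
    (h : LeftStarReducible cs s t y x) : IsReducedFactor cs x y := by
  wlog hs : cs.IsLeftDescent y s ∧ ¬ cs.IsLeftDescent y t ∧ x = cs.simple s * y ∧
      cs.IsLeftDescent x t generalizing s t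
  · exact this h.symm (h.2.resolve_left hs)
  obtain ⟨hs, -, rfl, -⟩ := hs
  refine ⟨cs.simple s, 1, by simp, ?_⟩
  have := cs.isLeftDescent_iff.mp hs
  rw [length_simple, length_one]
  omega

theorem RightStarReducible.inv {s t : B} {y x : W} (h : RightStarReducible cs s t y x) :
    LeftStarReducible cs s t y⁻¹ x⁻¹ := by
  refine ⟨h.1, ?_⟩
  simpa only [isLeftDescent_inv_iff, ← inv_inj (a := x), mul_inv_rev, inv_simple] using h.2

theorem IsReducedFactor.inv {x y : W} (h : IsReducedFactor cs x y) :
    IsReducedFactor cs x⁻¹ y⁻¹ := by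
  obtain ⟨a, b, rfl, hlen⟩ := h
  refine ⟨b⁻¹, a⁻¹, by simp [mul_assoc], ?_⟩
  simp only [length_inv]
  omega

theorem RightStarReducible.isReducedFactor {s t : B} {y x : W}
    (h : RightStarReducible cs s t y x) : IsReducedFactor cs x y := by
  simpa using (LeftStarReducible.isReducedFactor cs h.inv).inv

theorem StarReducible.isReducedFactor {y x : W} (h : StarReducible cs y x) :
    IsReducedFactor cs x y := by
  induction h using Relation.ReflTransGen.head_induction_on with
  | refl => exact IsReducedFactor.refl cs x
  | head hstep _ ih =>
    obtain ⟨s, t, hl | hr⟩ := hstep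
    · exact ih.trans cs hl.isReducedFactor
    · exact ih.trans cs hr.isReducedFactor

/-- A bookkeeping of the ends of `n` chains of pairwise noncommuting neighbours that partition the
heap of `y`: `T` and `U` contain the first and last letters of the chains, and `c` is the
colouring of the Coxeter graph. -/
def ChainEnds (c : B → ℕ) (n : ℕ) (y : W) (T U : Multiset B) : Prop :=
  T.card = n ∧ U.card = n ∧ (∀ i, cs.IsLeftDescent y i → i ∈ T) ∧
    (∀ i, cs.IsRightDescent y i → i ∈ U) ∧
    cs.length y + n + (T.map c).sum + (U.map c).sum ≡ 0 [MOD 2]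

theorem ChainEnds.inv {c : B → ℕ} {n : ℕ} {y : W} {T U : Multiset B}
    (h : ChainEnds cs c n y T U) : ChainEnds cs c n y⁻¹ U T := by
  obtain ⟨hT, hU, hL, hR, hpar⟩ := h
  refine ⟨hU, hT, ?_, ?_, ?_⟩
  · simpa only [isLeftDescent_inv_iff] using hR
  · simpa only [isRightDescent_inv_iff] using hL
  · rw [length_inv, add_right_comm]
    exact hpar

theorem ChainEnds.exists_of_leftStarReducible {c : B → ℕ} {n : ℕ}
    (hc : ∀ s t, Noncomm M s t → c s + c t = 1) {s t : B} {y x : W} (hy : FullyComm cs y)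
    (h : LeftStarReducible cs s t y x) {T U : Multiset B} (hx : ChainEnds cs c n x T U) :
    ∃ T', ChainEnds cs c n y T' U := by
  classical
  wlog hs : cs.IsLeftDescent y s ∧ ¬ cs.IsLeftDescent y t ∧ x = cs.simple s * y ∧
      cs.IsLeftDescent x t generalizing s t
  · exact this h.symm (h.2.resolve_left hs)
  obtain ⟨hsy, hty, hxy, htx⟩ := hs
  obtain ⟨hT, hU, hL, hR, hpar⟩ := hx
  obtain ⟨T, rfl⟩ := Multiset.exists_cons_of_mem (hL t htx)
  have hlen := cs.isLeftDescent_iff.mp hsy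
  have hyx : y = cs.simple s * x := by rw [hxy]; simp
  refine ⟨s ::ₘ T, ?_, hU, ?_, ?_, ?_⟩
  · simpa using hT
  · intro i hi
    by_cases his : i = s
    · simp [his]
    have hix : cs.IsLeftDescent x i := by
      rw [hxy]
      exact cs.isLeftDescent_simple_mul (Ne.symm his)
        (hy.coxeter_eq_two cs (Ne.symm his) hsy hi) hi
    have hit : i ≠ t := by
      rintro rfl
      exact hty hi
    have := hL i hix
    rw [Multiset.mem_cons] at this ⊢
    exact Or.inr (this.resolve_left hit)
  · intro i hi
    apply hR
    by_contra hix
    rw [hyx] at hi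
    have heq := cs.simple_mul_eq_mul_simple hix hi
    apply hty
    rw [hyx, heq]
    have h₁ := cs.not_isRightDescent_iff.mp hix
    have h₂ := cs.isLeftDescent_iff.mp htx
    have h₃ := cs.length_mul_le (cs.simple t * x) (cs.simple i)
    rw [length_simple] at h₃
    rw [IsLeftDescent, ← mul_assoc]
    omega
  · have hst := hc s t h.1
    rw [← hxy] at hlen
    rw [Multiset.map_cons, Multiset.sum_cons] at hpar ⊢
    rw [Nat.ModEq] at hpar ⊢
    omega

theorem ChainEnds.exists_of_starReducible {c : B → ℕ} {n : ℕ}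
    (hc : ∀ s t, Noncomm M s t → c s + c t = 1) {y x : W} (hy : FullyComm cs y)
    (h : StarReducible cs y x) {T U : Multiset B} (hx : ChainEnds cs c n x T U) :
    ∃ T' U', ChainEnds cs c n y T' U' := by
  induction h using Relation.ReflTransGen.head_induction_on with
  | refl => exact ⟨T, U, hx⟩
  | head hstep _ ih =>
    obtain ⟨s, t, hl | hr⟩ := hstep
    · obtain ⟨T', U', h'⟩ := ih (hy.of_isReducedFactor cs hl.isReducedFactor)
      obtain ⟨T'', h''⟩ := h'.exists_of_leftStarReducible cs hc hy hl
      exact ⟨T'', U', h''⟩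
    · obtain ⟨T', U', h'⟩ := ih (hy.of_isReducedFactor cs hr.isReducedFactor)
      obtain ⟨U'', h''⟩ := h'.inv.exists_of_leftStarReducible cs hc hy.inv hr.inv
      exact ⟨T', U'', by simpa using h''.inv⟩

theorem mem_of_isLeftDescent_wordProd {l : List B}
    (hl : ∀ u ∈ l, ∀ u' ∈ l, u ≠ u' → M u u' = 2) {i : B}
    (hi : cs.IsLeftDescent (cs.wordProd l) i) : i ∈ l := by
  obtain ⟨k, hk, hs, -⟩ := IsLeftDescent.exists_eraseIdx cs hi
  rw [getElem_leftInvSeq cs l k hk] at hs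
  have hcomm : Commute (cs.wordProd (l.take k)) (cs.simple l[k]) := by
    refine (Commute.list_prod_right _ _ ?_).symm
    intro a ha
    obtain ⟨u, hu, rfl⟩ := List.mem_map.mp ha
    by_cases huk : u = l[k]
    · rw [huk]
    · have := cs.simple_mul_simple_pow' u l[k]
      rw [hl u (List.mem_of_mem_take hu) _ (List.getElem_mem hk) huk, pow_two,
        mul_eq_one_iff_eq_inv, mul_inv_rev, inv_simple, inv_simple] at this
      exact this
  rw [hcomm.eq, mul_inv_cancel_right] at hs
  rw [cs.simple_injective hs]
  exact List.getElem_mem hk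

theorem chainEnds_wordProd {l : List B}
    (hl : ∀ u ∈ l, ∀ u' ∈ l, u ≠ u' → M u u' = 2) (hred : cs.IsReduced l) (c : B → ℕ) :
    ChainEnds cs c l.length (cs.wordProd l) l l := by
  refine ⟨rfl, rfl, fun i hi => mem_of_isLeftDescent_wordProd cs hl hi, fun i hi => ?_, ?_⟩
  · rw [← isLeftDescent_inv_iff, ← wordProd_reverse] at hi
    have := mem_of_isLeftDescent_wordProd cs (l := l.reverse) (by simpa using hl) hi
    simpa using this
  · rw [hred.eq, Nat.ModEq]
    omega

theorem length_le_nval {x w : W} (hx : IsCommProd cs x) (h : IsReducedFactor cs x w) :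
    cs.length x ≤ nval cs w := by
  obtain ⟨a, b, hw, hlen⟩ := h
  refine le_csSup ⟨cs.length w, ?_⟩ ⟨a, x, b, hw, hlen, hx, rfl⟩
  rintro k ⟨_, _, _, -, hlen', -, rfl⟩
  omega

theorem Multiset.nodup_and_mem_iff_of_card_le_ncard {α : Type*} {T : Multiset α} {s : Set α}
    (hs : ∀ a ∈ s, a ∈ T) (hcard : T.card ≤ s.ncard) : T.Nodup ∧ ∀ a, a ∈ T ↔ a ∈ s := by
  classical
  have hsub : s ⊆ (T.toFinset : Set α) := fun a ha => by simpa using hs a ha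
  have h₁ := Set.ncard_le_ncard hsub T.toFinset.finite_toSet
  rw [Set.ncard_coe_finset] at h₁
  have h₂ := T.toFinset_card_le
  have heq : s = (T.toFinset : Set α) :=
    Set.eq_of_subset_of_ncard_le hsub (by rw [Set.ncard_coe_finset]; omega)
      T.toFinset.finite_toSet
  refine ⟨Multiset.toFinset_card_eq_card_iff_nodup.mp (by omega), fun a => ?_⟩
  rw [heq]
  simp

/-- Lemma 7.7: suppose the Coxeter graph is bipartite and `W` has Property F.  If
`w ∈ W_c` satisfies `𝓛(w) = 𝓡(w)` and `|𝓛(w)| = n(w)`, then `ℓ(w) ≡ n(w) (mod 2)`. -/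
theorem statement11 (hbip : ∃ ε : B → Bool, ∀ s t : B, Noncomm M s t → ε s ≠ ε t)
    (hF : PropertyF cs) (w : W) (hw : FullyComm cs w)
    (hLR : leftDescents cs w = rightDescents cs w)
    (hcard : (leftDescents cs w).ncard = nval cs w) :
    cs.length w ≡ nval cs w [MOD 2] := by
  obtain ⟨ε, hε⟩ := hbip
  obtain ⟨x, hstar, hx⟩ := hF w hw
  have hle := length_le_nval cs hx (hstar.isReducedFactor cs)
  obtain ⟨l, -, hl, hred, rfl⟩ := hx
  rw [hred.eq] at hle
  have hc (s t : B) (h : Noncomm M s t) : (ε s).toNat + (ε t).toNat = 1 := by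
    have := hε s t h
    cases hs : ε s <;> cases ht : ε t <;> simp_all
  obtain ⟨T, U, hT, hU, hL, hR, hpar⟩ :=
    (chainEnds_wordProd cs hl hred (fun i => (ε i).toNat)).exists_of_starReducible cs hc hw hstar
  obtain ⟨hTnd, hTmem⟩ := Multiset.nodup_and_mem_iff_of_card_le_ncard
    (s := leftDescents cs w) hL (by omega)
  obtain ⟨hUnd, hUmem⟩ := Multiset.nodup_and_mem_iff_of_card_le_ncard
    (s := rightDescents cs w) hR (by rw [← hLR]; omega)
  have hTU : T = U := (Multiset.Nodup.ext hTnd hUnd).mpr fun a => by rw [hTmem, hUmem, hLR]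
  have hn : l.length = nval cs w := by
    refine le_antisymm hle ?_
    have hset : leftDescents cs w = (⟨T, hTnd⟩ : Finset B) := by
      ext a
      simp [hTmem]
    rw [← hcard, hset, Set.ncard_coe_finset, Finset.card_mk, hT]
  rw [hTU, hn] at hpar
  rw [Nat.ModEq] at hpar ⊢
  omega
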